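/- arXiv:2405.09878 — 2 statements merged into one kernel-verified Lean document; each statement's English description precedes it below -/
import Mathlib

section
/- Let f = h_L ∘ … ∘ h_1 be a multi-layer network with a continuous piecewise linear activation φ having |A(φ)| = k+1 linear pieces (k ≥ 1), and set d_ν := min{rank(W_j) : j = 1,…,ν}. Then the number of linear regions of f satisfies |A(f)| ≤ ∏_{ν=1}^{L} F(d_ν, n_ν, k), where F(d,n,k) := (k+1)·Σ_{j=0}^{d−1} C(n−1,j)·k^j + k^d·Σ_{j=d}^{n−1} C(j−1,d−1). -/
noncomputable section

/-- `φ` is affine (linear in the loose sense) on `S`. -/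
def AffineOn (φ : ℝ → ℝ) (S : Set ℝ) : Prop :=
  ∃ m c : ℝ, ∀ x ∈ S, φ x = m * x + c

/-- `φ` is a continuous piecewise linear (PWL) function whose set of linear regions is the
finite collection `A` of pairwise disjoint, nonempty open intervals whose closures cover `ℝ`,
with `φ` affine on each of them and each of them maximal with this property. -/
structure IsPWLWith (φ : ℝ → ℝ) (A : Finset (Set ℝ)) : Prop where
  cont : Continuous φ
  nonempty : ∀ I ∈ A, I.Nonempty
  isOpen : ∀ I ∈ A, IsOpen I
  ordConn : ∀ I ∈ A, I.OrdConnected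
  disjoint : ∀ I ∈ A, ∀ J ∈ A, I ≠ J → I ∩ J = ∅
  covers : (⋃ I ∈ A, closure I) = Set.univ
  affine : ∀ I ∈ A, AffineOn φ I
  maximal : ∀ I ∈ A, ∀ Z : Set ℝ, IsOpen Z → Z.OrdConnected → I ⊆ Z → AffineOn φ Z → Z ⊆ I

/-- Output of the `l`-th layer of the multi-layer network with activation `φ`, layer widths
`nsz`, weight matrices `W` and biases `u` (layer `0` is the input). -/
def layerOut (φ : ℝ → ℝ) (nsz : ℕ → ℕ)
    (W : ∀ j : ℕ, Matrix (Fin (nsz (j + 1))) (Fin (nsz j)) ℝ)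
    (u : ∀ j : ℕ, Fin (nsz (j + 1)) → ℝ) : (l : ℕ) → (Fin (nsz 0) → ℝ) → Fin (nsz l) → ℝ
  | 0 => fun x => x
  | l + 1 => fun x i => φ (((W l).mulVec (layerOut φ nsz W u l x) + u l) i)

/-- The multi-layer network function `f = h_L ∘ … ∘ h_1 : ℝ^d → ℝ^d` (using `nsz 0 = nsz L`). -/
def netFun (φ : ℝ → ℝ) (nsz : ℕ → ℕ)
    (W : ∀ j : ℕ, Matrix (Fin (nsz (j + 1))) (Fin (nsz j)) ℝ)
    (u : ∀ j : ℕ, Fin (nsz (j + 1)) → ℝ) (L : ℕ) (hio : nsz 0 = nsz L)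
    (x : Fin (nsz 0) → ℝ) : Fin (nsz 0) → ℝ :=
  fun i => layerOut φ nsz W u L x (Fin.cast hio i)

/-- A linear region of the `L`-layer network: a nonempty set `C` consisting of exactly the
points whose pre-activations, in every layer and every neuron, lie in one fixed linear region
of `φ` (the same for all points of `C`). -/
def IsLinearRegion (φ : ℝ → ℝ) (Aφ : Finset (Set ℝ)) (L : ℕ) (nsz : ℕ → ℕ)
    (W : ∀ j : ℕ, Matrix (Fin (nsz (j + 1))) (Fin (nsz j)) ℝ)
    (u : ∀ j : ℕ, Fin (nsz (j + 1)) → ℝ) (C : Set (Fin (nsz 0) → ℝ)) : Prop :=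
  C.Nonempty ∧ ∃ I : ∀ l : ℕ, Fin (nsz (l + 1)) → Set ℝ,
    (∀ l, l < L → ∀ i, I l i ∈ Aφ) ∧
    C = {x | ∀ l, l < L → ∀ i, ((W l).mulVec (layerOut φ nsz W u l x) + u l) i ∈ I l i}

/-- The upper-bound quantity
`F(d,n,k) = (k+1)·Σ_{j<d} C(n−1,j)·k^j + k^d·Σ_{j=d}^{n−1} C(j−1,d−1)`
(the number of regions of an arrangement in `Λ_d(n,k)`). -/
def Fbound (d n k : ℕ) : ℕ :=
  (k + 1) * ∑ j ∈ Finset.range d, Nat.choose (n - 1) j * k ^ j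
    + k ^ d * ∑ j ∈ Finset.Icc d (n - 1), Nat.choose (j - 1) (d - 1)

open Classical in
/-- Breakpoints: a set of at most `k` reals separating the pieces. -/
theorem exists_breakpoints (A : Finset (Set ℝ)) (k : ℕ) (hcard : A.card = k + 1)
    (hne : ∀ I ∈ A, I.Nonempty) (hop : ∀ I ∈ A, IsOpen I) (hoc : ∀ I ∈ A, I.OrdConnected)
    (hdis : ∀ I ∈ A, ∀ J ∈ A, I ≠ J → I ∩ J = ∅) :
    ∃ T : Finset ℝ, T.card ≤ k ∧ ∀ J : Set ℝ, J.OrdConnected →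
      (A.filter (fun I => (I ∩ J).Nonempty)).card ≤ 1 + (T.filter (fun t => t ∈ J)).card := by
  have hdis' : ∀ I ∈ A, ∀ J ∈ A, I ≠ J → ∀ x, x ∈ I → x ∈ J → False := by
    intro I hI J hJ h x h1 h2
    have := hdis I hI J hJ h
    have h3 : x ∈ I ∩ J := ⟨h1, h2⟩
    rw [this] at h3
    exact h3
  have hrep : ∀ I : Set ℝ, ∃ x : ℝ, I ∈ A → x ∈ I := by
    intro I
    by_cases h : I ∈ A
    · obtain ⟨x, hx⟩ := hne I h
      exact ⟨x, fun _ => hx⟩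
    · exact ⟨0, fun h' => absurd h' h⟩
  choose rep hrep using hrep
  have hord : ∀ I ∈ A, ∀ J ∈ A, I ≠ J → rep I ≤ rep J → ∀ x ∈ I, ∀ y ∈ J, x < y := by
    intro I hI J hJ hIJ hr x hx y hy
    by_contra hlt
    push Not at hlt
    rcases le_total (rep I) y with h | h
    · exact hdis' I hI J hJ hIJ y ((hoc I hI).out (hrep I hI) hx ⟨h, hlt⟩) hy
    · exact hdis' I hI J hJ hIJ (rep I) (hrep I hI)
        ((hoc J hJ).out hy (hrep J hJ) ⟨h, hr⟩)
  have hAne : A.Nonempty := Finset.card_pos.mp (by omega)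
  obtain ⟨M, hM, hMmax⟩ := A.exists_max_image rep hAne
  refine ⟨(A.erase M).image sSup, ?_, ?_⟩
  · refine Finset.card_image_le.trans ?_
    rw [Finset.card_erase_of_mem hM, hcard]
    simp
  · intro J hJ
    set B := A.filter (fun I => (I ∩ J).Nonempty) with hB
    rcases B.eq_empty_or_nonempty with h0 | h0
    · rw [h0]; simp
    obtain ⟨N, hN, hNmax⟩ := B.exists_max_image rep h0
    have hNA : N ∈ A := (Finset.mem_filter.mp hN).1
    have hle : (B.erase N).card ≤ (((A.erase M).image sSup).filter (fun t => t ∈ J)).card := by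
      apply Finset.card_le_card_of_injOn sSup
      · intro I hI
        have hI' := Finset.mem_erase.mp (Finset.mem_coe.mp hI)
        obtain ⟨hIA, x, hxI, hxJ⟩ := Finset.mem_filter.mp hI'.2
        obtain ⟨_, y, hyN, hyJ⟩ := Finset.mem_filter.mp hN
        have hr := hNmax I hI'.2
        have hlt := hord I hIA N hNA hI'.1 hr
        rw [Finset.mem_coe, Finset.mem_filter, Finset.mem_image]
        refine ⟨⟨I, Finset.mem_erase.mpr ⟨?_, hIA⟩, rfl⟩, ?_⟩
        · rintro rfl
          have h1 := hMmax N hNA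
          have := hord N hNA I hIA (Ne.symm hI'.1) h1 _ (hrep N hNA) _ (hrep I hIA)
          linarith
        · refine hJ.out hxJ hyJ ⟨?_, ?_⟩
          · exact le_csSup ⟨y, fun z hz => (hlt z hz y hyN).le⟩ hxI
          · exact csSup_le ⟨x, hxI⟩ fun z hz => (hlt z hz y hyN).le
      · have key : ∀ I ∈ B.erase N, ∀ I' ∈ B.erase N, I ≠ I' → rep I ≤ rep I' →
            sSup I < sSup I' := by
          intro I hI I' hI' hne' hr
          have h1 := Finset.mem_erase.mp hI
          have h2 := Finset.mem_erase.mp hI'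
          have hIA := (Finset.mem_filter.mp h1.2).1
          have hIA' := (Finset.mem_filter.mp h2.2).1
          have hlt := hord I hIA I' hIA' hne' hr
          have hlt' := hord I' hIA' N hNA h2.1 (hNmax I' h2.2)
          have h3 : sSup I ≤ rep I' :=
            csSup_le ⟨_, hrep I hIA⟩ fun z hz => (hlt z hz _ (hrep I' hIA')).le
          obtain ⟨ε, hε, hball⟩ := Metric.isOpen_iff.mp (hop I' hIA') _ (hrep I' hIA')
          have h4 : rep I' + ε / 2 ∈ I' := hball (by
            rw [Metric.mem_ball, Real.dist_eq]
            rw [show rep I' + ε / 2 - rep I' = ε / 2 by ring, abs_of_pos (by linarith)]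
            linarith)
          have h5 : rep I' + ε / 2 ≤ sSup I' :=
            le_csSup ⟨rep N, fun z hz => (hlt' z hz _ (hrep N hNA)).le⟩ h4
          linarith
        intro I hI I' hI' heq
        by_contra hne'
        rcases le_total (rep I) (rep I') with h | h
        · have := key I hI I' hI' hne' h
          linarith
        · have := key I' hI' I hI (Ne.symm hne') h
          linarith
    rw [Finset.card_erase_of_mem hN] at hle
    omega

/-- The closed form of the bound. -/
def Gbound (d n k : ℕ) : ℕ := ∑ j ∈ Finset.range (d + 1), Nat.choose n j * k ^ j

theorem Gbound_zero (n k : ℕ) : Gbound 0 n k = 1 := by simp [Gbound]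

theorem one_le_Gbound (d n k : ℕ) : 1 ≤ Gbound d n k := by
  unfold Gbound
  rw [Finset.sum_range_succ']
  simp

theorem Gbound_succ (d n k : ℕ) :
    Gbound (d + 1) (n + 1) k = Gbound (d + 1) n k + k * Gbound d n k := by
  unfold Gbound
  rw [Finset.sum_range_succ', Finset.sum_range_succ' _ (d + 1), Finset.mul_sum]
  have : ∀ j, Nat.choose (n + 1) (j + 1) * k ^ (j + 1)
      = Nat.choose n (j + 1) * k ^ (j + 1) + k * (Nat.choose n j * k ^ j) := by
    intro j
    rw [Nat.choose_succ_succ]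
    ring
  simp only [this, Finset.sum_add_distrib]
  simp
  ring

theorem Gbound_mono_right (d n k : ℕ) : Gbound d n k ≤ Gbound d (n + 1) k := by
  unfold Gbound
  gcongr
  omega

theorem hockey (d m : ℕ) :
    ∑ j ∈ Finset.Icc (d + 1) m, Nat.choose (j - 1) d = Nat.choose m (d + 1) := by
  induction m with
  | zero => simp
  | succ m ih =>
    by_cases h : d + 1 ≤ m + 1
    · rw [Finset.sum_Icc_succ_top h, ih, Nat.choose_succ_succ]
      simp
      ring
    · rw [Finset.Icc_eq_empty h, Nat.choose_eq_zero_of_lt (by omega)]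
      simp

theorem Gbound_le_Fbound (d n k : ℕ) : Gbound d n k ≤ Fbound d n k := by
  cases d with
  | zero =>
    rw [Gbound_zero]
    simp [Fbound]
  | succ d =>
    cases n with
    | zero =>
      have h0 : Gbound (d + 1) 0 k = 1 := by
        unfold Gbound
        rw [Finset.sum_range_succ']
        simp
      rw [h0]
      unfold Fbound
      rw [Finset.sum_range_succ']
      simp
    | succ n =>
      rw [Gbound_succ]
      unfold Fbound
      rw [Nat.add_sub_cancel, Nat.add_sub_cancel, hockey]
      unfold Gbound
      rw [Finset.sum_range_succ _ (d + 1)]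
      apply le_of_eq
      ring

open Classical in
/-- Patterns realised by the affine subspace `c + S`. -/
def Pat (A : Finset (Set ℝ)) {n : ℕ} (S : Submodule ℝ (Fin n → ℝ)) (c : Fin n → ℝ) :
    Finset (Fin n → Set ℝ) :=
  (Fintype.piFinset fun _ => A).filter (fun p => ∃ v ∈ S, ∀ i, c i + v i ∈ p i)

theorem mem_Pat (A : Finset (Set ℝ)) {n : ℕ} (S : Submodule ℝ (Fin n → ℝ)) (c : Fin n → ℝ)
    (p : Fin n → Set ℝ) :
    p ∈ Pat A S c ↔ (∀ i, p i ∈ A) ∧ ∃ v ∈ S, ∀ i, c i + v i ∈ p i := by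
  simp [Pat]

/-- Drop the first coordinate. -/
def tailL (n : ℕ) : (Fin (n + 1) → ℝ) →ₗ[ℝ] (Fin n → ℝ) := LinearMap.funLeft ℝ ℝ Fin.succ

theorem tailL_apply (n : ℕ) (v : Fin (n + 1) → ℝ) (i : Fin n) : tailL n v i = v i.succ := rfl

open Classical in
theorem card_Pat_le (A : Finset (Set ℝ)) (k : ℕ) (hcard : A.card = k + 1)
    (hne : ∀ I ∈ A, I.Nonempty) (hop : ∀ I ∈ A, IsOpen I) (hoc : ∀ I ∈ A, I.OrdConnected)
    (hdis : ∀ I ∈ A, ∀ J ∈ A, I ≠ J → I ∩ J = ∅) (n : ℕ) :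
    ∀ (d : ℕ) (S : Submodule ℝ (Fin n → ℝ)) (c : Fin n → ℝ), Module.finrank ℝ S ≤ d →
      (Pat A S c).card ≤ Gbound d n k := by
  obtain ⟨T, hTk, hT⟩ := exists_breakpoints A k hcard hne hop hoc hdis
  induction n with
  | zero =>
    intro d S c _
    refine le_trans ?_ (one_le_Gbound d 0 k)
    exact Finset.card_le_one_of_subsingleton _
  | succ n ih =>
    intro d S c hd
    set S' := S.map (tailL n) with hS'
    set c' := tailL n c with hc'
    have hS'd : Module.finrank ℝ S' ≤ d := (Submodule.finrank_map_le _ _).trans hd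
    have hmaps : ∀ p ∈ Pat A S c, (Fin.tail p : Fin n → Set ℝ) ∈ Pat A S' c' := by
      intro p hp
      rw [mem_Pat] at hp ⊢
      obtain ⟨h1, v, hv, h2⟩ := hp
      exact ⟨fun i => h1 _, tailL n v, Submodule.mem_map_of_mem hv, fun i => h2 _⟩
    let J : (Fin n → Set ℝ) → Set ℝ := fun q =>
      {t | ∃ v ∈ S, (∀ i : Fin n, c i.succ + v i.succ ∈ q i) ∧ c 0 + v 0 = t}
    have hJ : ∀ q : Fin n → Set ℝ, (∀ i, q i ∈ A) → (J q).OrdConnected := by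
      intro q hq
      apply Convex.ordConnected
      rintro _ ⟨v, hv, hv1, rfl⟩ _ ⟨w, hw, hw1, rfl⟩ a b ha hb hab
      refine ⟨a • v + b • w, S.add_mem (S.smul_mem _ hv) (S.smul_mem _ hw), ?_, ?_⟩
      · intro i
        have := (hoc _ (hq i)).convex (hv1 i) (hw1 i) ha hb hab
        convert this using 1
        simp only [Pi.add_apply, Pi.smul_apply, smul_eq_mul]
        have : c i.succ = (a + b) * c i.succ := by rw [hab, one_mul]
        linear_combination this
      · simp only [Pi.add_apply, Pi.smul_apply, smul_eq_mul]
        linear_combination (-c 0) * hab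
    have hfib : ∀ q ∈ Pat A S' c', ((Pat A S c).filter (fun p => (Fin.tail p : Fin n → Set ℝ) = q)).card
        ≤ (A.filter (fun I => (I ∩ J q).Nonempty)).card := by
      intro q hq
      apply Finset.card_le_card_of_injOn (fun p => p 0)
      · intro p hp
        obtain ⟨hp1, hp2⟩ := Finset.mem_filter.mp (Finset.mem_coe.mp hp)
        obtain ⟨h1, v, hv, h2⟩ := (mem_Pat A S c p).mp hp1
        rw [Finset.mem_coe, Finset.mem_filter]
        refine ⟨h1 0, c 0 + v 0, h2 0, v, hv, ?_, rfl⟩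
        intro i
        rw [← hp2]
        exact h2 _
      · intro p hp p' hp' h0
        have e1 := (Finset.mem_filter.mp (Finset.mem_coe.mp hp)).2
        have e2 := (Finset.mem_filter.mp (Finset.mem_coe.mp hp')).2
        funext i
        refine Fin.cases h0 (fun i => ?_) i
        exact congrFun (e1.trans e2.symm) i
    have hsum : (Pat A S c).card ≤
        ∑ q ∈ Pat A S' c', (A.filter (fun I => (I ∩ J q).Nonempty)).card := by
      rw [Finset.card_eq_sum_card_fiberwise (f := fun p : Fin (n + 1) → Set ℝ => (Fin.tail p : Fin n → Set ℝ))
        (t := Pat A S' c') (fun p hp => hmaps p hp)]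
      exact Finset.sum_le_sum hfib
    by_cases hconst : ∀ v ∈ S, v 0 = 0
    · -- the first functional is constant
      have h1 : ∀ q ∈ Pat A S' c', (A.filter (fun I => (I ∩ J q).Nonempty)).card ≤ 1 := by
        intro q _
        rw [Finset.card_le_one]
        intro I hI I' hI'
        obtain ⟨hIA, t, htI, v, hv, _, rfl⟩ := Finset.mem_filter.mp hI
        obtain ⟨hIA', t', htI', v', hv', _, rfl⟩ := Finset.mem_filter.mp hI'
        by_contra hne'
        have h3 := hdis I hIA I' hIA' hne'
        rw [hconst v hv] at htI
        rw [hconst v' hv'] at htI'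
        have h4 : c 0 + 0 ∈ I ∩ I' := ⟨htI, htI'⟩
        rw [h3] at h4
        exact h4
      calc (Pat A S c).card ≤ ∑ q ∈ Pat A S' c', 1 := hsum.trans (Finset.sum_le_sum h1)
        _ = (Pat A S' c').card := by simp
        _ ≤ Gbound d n k := ih d S' c' hS'd
        _ ≤ _ := Gbound_mono_right d n k
    · push Not at hconst
      obtain ⟨w, hwS, hw0⟩ := hconst
      set K : Submodule ℝ (Fin (n + 1) → ℝ) :=
        S ⊓ LinearMap.ker (LinearMap.proj (R := ℝ) (φ := fun _ : Fin (n + 1) => ℝ) 0) with hK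
      have hKlt : Module.finrank ℝ K < Module.finrank ℝ S := by
        apply Submodule.finrank_lt_finrank_of_lt
        refine lt_of_le_of_ne inf_le_left ?_
        intro h
        have : w ∈ K := by rw [h]; exact hwS
        exact hw0 this.2
      cases d with
      | zero => omega
      | succ d =>
        have hT2 : ∀ t ∈ T, ((Pat A S' c').filter (fun q => t ∈ J q)).card ≤ Gbound d n k := by
          intro t _
          set v0 : Fin (n + 1) → ℝ := ((t - c 0) / w 0) • w with hv0
          have hv0S : v0 ∈ S := S.smul_mem _ hwS
          have hv00 : v0 0 = t - c 0 := by
            simp [hv0]; field_simp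
          refine le_trans (Finset.card_le_card ?_)
            (ih d (K.map (tailL n)) (tailL n (c + v0))
              ((Submodule.finrank_map_le _ _).trans (by omega)))
          intro q hq
          obtain ⟨hq1, v, hv, hv1, hv2⟩ := Finset.mem_filter.mp hq
          rw [mem_Pat]
          refine ⟨((mem_Pat A S' c' q).mp hq1).1, tailL n (v - v0),
            Submodule.mem_map_of_mem ⟨S.sub_mem hv hv0S, ?_⟩, ?_⟩
          · change (v - v0) 0 = 0
            rw [Pi.sub_apply, hv00]
            linarith
          · intro i
            have := hv1 i
            convert this using 1
            simp only [tailL_apply, Pi.add_apply, Pi.sub_apply]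
            ring
        have hq3 : ∀ q ∈ Pat A S' c', (A.filter (fun I => (I ∩ J q).Nonempty)).card ≤
            1 + (T.filter (fun t => t ∈ J q)).card := fun q hq =>
          hT _ (hJ q ((mem_Pat A S' c' q).mp hq).1)
        have hswap : ∑ q ∈ Pat A S' c', (T.filter (fun t => t ∈ J q)).card
            = ∑ t ∈ T, ((Pat A S' c').filter (fun q => t ∈ J q)).card := by
          simp only [Finset.card_filter]
          exact Finset.sum_comm
        rw [Gbound_succ]
        calc (Pat A S c).card
            ≤ ∑ q ∈ Pat A S' c', (1 + (T.filter (fun t => t ∈ J q)).card) :=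
              hsum.trans (Finset.sum_le_sum hq3)
          _ = (Pat A S' c').card + ∑ t ∈ T, ((Pat A S' c').filter (fun q => t ∈ J q)).card := by
              rw [Finset.sum_add_distrib, hswap]; simp
          _ ≤ Gbound (d + 1) n k + ∑ t ∈ T, Gbound d n k :=
              add_le_add (ih (d + 1) S' c' hS'd) (Finset.sum_le_sum hT2)
          _ ≤ _ := by
              rw [Finset.sum_const, smul_eq_mul]
              gcongr

open Classical in
theorem regions_cover
    (φ : ℝ → ℝ) (Aφ : Finset (Set ℝ)) (k : ℕ)
    (hφ : IsPWLWith φ Aφ) (hcard : Aφ.card = k + 1)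
    (nsz : ℕ → ℕ)
    (W : ∀ j : ℕ, Matrix (Fin (nsz (j + 1))) (Fin (nsz j)) ℝ)
    (u : ∀ j : ℕ, Fin (nsz (j + 1)) → ℝ) (L : ℕ) :
    ∃ R : Finset (Set (Fin (nsz 0) → ℝ)),
      (∀ C, IsLinearRegion φ Aφ L nsz W u C → C ∈ R) ∧
      (∀ C ∈ R, ∃ (M : (Fin (nsz 0) → ℝ) →ₗ[ℝ] (Fin (nsz L) → ℝ)) (b : Fin (nsz L) → ℝ),
        (∀ x ∈ C, layerOut φ nsz W u L x = M x + b) ∧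
        ∀ j < L, Module.finrank ℝ (LinearMap.range M) ≤ (W j).rank) ∧
      R.card ≤ ∏ ν ∈ Finset.range L,
        Fbound (Finset.inf' (Finset.range (ν + 1)) Finset.nonempty_range_add_one
          fun j => (W j).rank) (nsz (ν + 1)) k := by
  induction L with
  | zero =>
    refine ⟨{Set.univ}, ?_, ?_, by simp⟩
    · rintro C ⟨_, I, _, hC⟩
      simp [hC]
    · intro C _
      exact ⟨LinearMap.id, 0, fun x _ => by simp [layerOut], by simp⟩
  | succ L ih =>
    obtain ⟨R, hR1, hR2, hR3⟩ := ih
    have hR2' : ∀ C : Set (Fin (nsz 0) → ℝ),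
        ∃ (M : (Fin (nsz 0) → ℝ) →ₗ[ℝ] (Fin (nsz L) → ℝ)) (b : Fin (nsz L) → ℝ), C ∈ R →
        ((∀ x ∈ C, layerOut φ nsz W u L x = M x + b) ∧
        ∀ j < L, Module.finrank ℝ (LinearMap.range M) ≤ (W j).rank) := by
      intro C
      by_cases h : C ∈ R
      · obtain ⟨M, b, h'⟩ := hR2 C h
        exact ⟨M, b, fun _ => h'⟩
      · exact ⟨0, 0, fun h' => absurd h' h⟩
    choose M b hMb using hR2'
    let WM : Set (Fin (nsz 0) → ℝ) → ((Fin (nsz 0) → ℝ) →ₗ[ℝ] (Fin (nsz (L + 1)) → ℝ)) :=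
      fun C => (W L).mulVecLin ∘ₗ M C
    let cc : Set (Fin (nsz 0) → ℝ) → (Fin (nsz (L + 1)) → ℝ) :=
      fun C => (W L).mulVec (b C) + u L
    have hpre : ∀ C ∈ R, ∀ x ∈ C, (W L).mulVec (layerOut φ nsz W u L x) + u L
        = cc C + WM C x := by
      intro C hC x hx
      rw [(hMb C hC).1 x hx, Matrix.mulVec_add]
      simp only [cc, WM, LinearMap.comp_apply, Matrix.mulVecLin_apply]
      abel
    have hrank : ∀ C ∈ R, ∀ j < L + 1,
        Module.finrank ℝ (LinearMap.range (WM C)) ≤ (W j).rank := by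
      intro C hC j hj
      have hr1 : Module.finrank ℝ (LinearMap.range (WM C)) ≤
          Module.finrank ℝ (LinearMap.range (M C)) := by
        rw [LinearMap.range_comp]
        exact Submodule.finrank_map_le _ _
      have hr2 : Module.finrank ℝ (LinearMap.range (WM C)) ≤ (W L).rank := by
        unfold Matrix.rank
        exact Submodule.finrank_mono (LinearMap.range_comp_le_range _ _)
      rcases Nat.lt_succ_iff_lt_or_eq.mp hj with h | h
      · exact hr1.trans ((hMb C hC).2 j h)
      · rw [h]; exact hr2
    let cell : Set (Fin (nsz 0) → ℝ) → (Fin (nsz (L + 1)) → Set ℝ) → Set (Fin (nsz 0) → ℝ) :=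
      fun C p => C ∩ {x | ∀ i, ((W L).mulVec (layerOut φ nsz W u L x) + u L) i ∈ p i}
    refine ⟨R.biUnion fun C =>
      (Pat Aφ (LinearMap.range (WM C)) (cc C)).image (cell C), ?_, ?_, ?_⟩
    · rintro C ⟨⟨x, hx⟩, I, hI, hC⟩
      set C' : Set (Fin (nsz 0) → ℝ) :=
        {x | ∀ l, l < L → ∀ i, ((W l).mulVec (layerOut φ nsz W u l x) + u l) i ∈ I l i} with hC'
      have hx' := hx
      rw [hC] at hx'
      have hxC' : x ∈ C' := fun l hl => hx' l (by omega)
      have hC'R : C' ∈ R := hR1 C' ⟨⟨x, hxC'⟩, I, fun l hl => hI l (by omega), rfl⟩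
      rw [Finset.mem_biUnion]
      refine ⟨C', hC'R, Finset.mem_image.mpr ⟨I L, ?_, ?_⟩⟩
      · rw [mem_Pat]
        refine ⟨hI L (by omega), WM C' x, ⟨x, rfl⟩, fun i => ?_⟩
        have h1 := hx' L (by omega) i
        rw [hpre C' hC'R x hxC'] at h1
        exact h1
      · rw [hC]
        ext y
        constructor
        · rintro ⟨h1, h2⟩ l hl
          rcases Nat.lt_succ_iff_lt_or_eq.mp hl with h | h
          · exact h1 l h
          · subst h
            exact h2
        · intro h
          exact ⟨fun l hl => h l (by omega), h L (by omega)⟩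
    · intro D hD
      obtain ⟨C, hC, hD⟩ := Finset.mem_biUnion.mp hD
      obtain ⟨p, hp, rfl⟩ := Finset.mem_image.mp hD
      have hpA := ((mem_Pat _ _ _ _).mp hp).1
      choose m e hme using fun i => hφ.affine (p i) (hpA i)
      refine ⟨(Matrix.diagonal m).mulVecLin ∘ₗ WM C, fun i => m i * cc C i + e i, ?_, ?_⟩
      · rintro x ⟨hxC, hxp⟩
        funext i
        have h1 := hme i _ (hxp i)
        change φ _ = _
        rw [h1, hpre C hC x hxC]
        simp only [Pi.add_apply, LinearMap.comp_apply, Matrix.mulVecLin_apply,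
          Matrix.mulVec_diagonal]
        ring
      · intro j hj
        refine le_trans ?_ (hrank C hC j hj)
        rw [LinearMap.range_comp]
        exact Submodule.finrank_map_le _ _
    · rw [Finset.prod_range_succ]
      refine (Finset.card_biUnion_le_card_mul _ _ _ ?_).trans (Nat.mul_le_mul_right _ hR3)
      intro C hC
      refine Finset.card_image_le.trans (le_trans ?_ (Gbound_le_Fbound _ _ _))
      apply card_Pat_le Aφ k hcard hφ.nonempty hφ.isOpen hφ.ordConn hφ.disjoint
      apply Finset.le_inf'
      intro j hj
      exact hrank C hC j (Finset.mem_range.mp hj)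

/-- The number of linear regions of a multi-layer network with a PWL
activation with `k+1` pieces is at most `∏_{ν=1}^{L} F(d_ν, n_ν, k)`, where
`d_ν = min{rank W_j : j ≤ ν}`. -/
theorem card_linearRegions_le
    (φ : ℝ → ℝ) (Aφ : Finset (Set ℝ)) (k : ℕ) (hk : 1 ≤ k)
    (hφ : IsPWLWith φ Aφ) (hcard : Aφ.card = k + 1)
    (L : ℕ) (hL : 1 ≤ L) (nsz : ℕ → ℕ)
    (W : ∀ j : ℕ, Matrix (Fin (nsz (j + 1))) (Fin (nsz j)) ℝ)
    (u : ∀ j : ℕ, Fin (nsz (j + 1)) → ℝ) :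
    {C : Set (Fin (nsz 0) → ℝ) | IsLinearRegion φ Aφ L nsz W u C}.ncard ≤
      ∏ ν ∈ Finset.range L,
        Fbound (Finset.inf' (Finset.range (ν + 1)) Finset.nonempty_range_add_one
          fun j => (W j).rank) (nsz (ν + 1)) k := by
  obtain ⟨R, hR1, _, hR3⟩ := regions_cover φ Aφ k hφ hcard nsz W u L
  refine le_trans ?_ hR3
  rw [← Set.ncard_coe_finset]
  exact Set.ncard_le_ncard (fun C hC => hR1 C hC) R.finite_toSet

end
end

section
/- Let f = h_L ∘ … ∘ h_1 be a multi-layer network with a continuous piecewise linear activation φ having |A(φ)| = k+1 linear pieces (k ≥ 1), and set d_ν := min{rank(W_j) : j = 1,…,ν}. Then the set Fix(f) of fixed points of f has at most ∏_{ν=1}^{L} F(d_ν, n_ν, k) connected components, where F(d,n,k) := (k+1)·Σ_{j=0}^{d−1} C(n−1,j)·k^j + k^d·Σ_{j=d}^{n−1} C(j−1,d−1). -/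
noncomputable section

/-- Number of thresholds of `T` strictly below `t`. -/
def cellIdx (T : Finset ℝ) (t : ℝ) : ℕ := (T.filter (fun s => s < t)).card

/-- Region count of an arrangement of `n` families of `k` parallel hyperplanes in dimension `d`. -/
def regB (n d k : ℕ) : ℕ := ∑ j ∈ Finset.range (d + 1), n.choose j * k ^ j

lemma regB_succ (n d k : ℕ) : regB (n + 1) (d + 1) k = regB n (d + 1) k + k * regB n d k := by
  unfold regB
  rw [Finset.sum_range_succ', Finset.sum_range_succ' _ (d + 1), Finset.mul_sum]
  have : ∀ j ∈ Finset.range (d + 1), (n + 1).choose (j + 1) * k ^ (j + 1)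
      = n.choose (j + 1) * k ^ (j + 1) + k * (n.choose j * k ^ j) := by
    intro j _
    rw [Nat.choose_succ_succ]
    ring
  rw [Finset.sum_congr rfl this, Finset.sum_add_distrib]
  simp
  ring

lemma regB_mono_n (n d k : ℕ) : regB n d k ≤ regB (n + 1) d k := by
  unfold regB
  refine Finset.sum_le_sum fun j _ => ?_
  exact Nat.mul_le_mul_right _ (Nat.choose_le_choose _ (Nat.le_succ n))

lemma regB_pos (n d k : ℕ) : 1 ≤ regB n d k := by
  unfold regB
  rw [Finset.sum_range_succ']
  simp

lemma sum_choose_pred (e m : ℕ) :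
    ∑ j ∈ Finset.Icc (e + 1) m, (j - 1).choose e = m.choose (e + 1) := by
  induction m with
  | zero => simp
  | succ m ih =>
    by_cases h : e ≤ m
    · rw [← Finset.insert_Icc_right_eq_Icc_add_one (by omega), Finset.sum_insert (by simp), ih,
        Nat.choose_succ_succ]
      simp
    · rw [Finset.Icc_eq_empty (by omega), Nat.choose_eq_zero_of_lt (by omega)]
      simp

lemma regB_le_Fbound (n d k : ℕ) : regB n d k ≤ Fbound d n k := by
  rcases d with _ | e
  · have h : regB n 0 k = 1 := by simp [regB]
    rw [h]
    unfold Fbound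
    have : 0 < ∑ j ∈ Finset.Icc 0 (n - 1), Nat.choose (j - 1) (0 - 1) := by
      refine Finset.sum_pos (fun j _ => by simp) ⟨0, by simp⟩
    simpa using this
  · rcases n with _ | m
    · have h : regB 0 (e + 1) k = 1 := by
        unfold regB
        rw [Finset.sum_range_succ']
        simp
      rw [h]
      unfold Fbound
      have h2 := regB_pos (0 - 1) e k
      unfold regB at h2
      nlinarith [Nat.zero_le k, Nat.zero_le (k ^ (e + 1) * ∑ j ∈ Finset.Icc (e + 1) (0 - 1), Nat.choose (j - 1) (e + 1 - 1))]
    · rw [regB_succ]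
      unfold Fbound
      simp only [Nat.add_sub_cancel]
      rw [sum_choose_pred]
      unfold regB
      rw [Finset.sum_range_succ _ (e + 1)]
      apply le_of_eq
      ring

lemma cellIdx_mono (T : Finset ℝ) : Monotone (cellIdx T) := by
  intro a b h
  refine Finset.card_le_card ?_
  intro s hs
  simp only [Finset.mem_filter] at hs ⊢
  exact ⟨hs.1, hs.2.trans_le h⟩

lemma cellIdx_between (T : Finset ℝ) {a b s : ℝ} (h : cellIdx T a = cellIdx T b)
    (h0 : 0 ≤ s) (h1 : s ≤ 1) : cellIdx T (a + s * (b - a)) = cellIdx T a := by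
  rcases le_total a b with hab | hab
  · have i1 := cellIdx_mono T (show a ≤ a + s * (b - a) by nlinarith)
    have i2 := cellIdx_mono T (show a + s * (b - a) ≤ b by nlinarith)
    omega
  · have i1 := cellIdx_mono T (show a + s * (b - a) ≤ a by nlinarith)
    have i2 := cellIdx_mono T (show b ≤ a + s * (b - a) by nlinarith)
    omega

/-- If `a` has smaller index than `b`, there is a threshold in `[a,b)` of index one less. -/
lemma exists_threshold (T : Finset ℝ) {a b : ℝ} (h : cellIdx T a < cellIdx T b) :
    ∃ t ∈ T, a ≤ t ∧ t < b ∧ cellIdx T b = cellIdx T t + 1 := by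
  have hne : (T.filter (fun s => s < b)).Nonempty := by
    rw [← Finset.card_pos]
    unfold cellIdx at h
    omega
  obtain ⟨t, ht, hmax⟩ := Finset.exists_max_image _ (fun s => s) hne
  simp only [Finset.mem_filter] at ht hmax
  refine ⟨t, ht.1, ?_, ht.2, ?_⟩
  · by_contra hta
    push Not at hta
    have : cellIdx T b ≤ cellIdx T a := by
      refine Finset.card_le_card ?_
      intro s hs
      simp only [Finset.mem_filter] at hs ⊢
      exact ⟨hs.1, (hmax s hs).trans_lt hta⟩
    omega
  · unfold cellIdx
    have : T.filter (fun s => s < b) = insert t (T.filter (fun s => s < t)) := by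
      ext s
      simp only [Finset.mem_filter, Finset.mem_insert]
      constructor
      · intro hs
        rcases (hmax s hs).lt_or_eq with h | h
        · exact Or.inr ⟨hs.1, h⟩
        · exact Or.inl h
      · rintro (rfl | hs)
        · exact ht
        · exact ⟨hs.1, hs.2.trans ht.2⟩
    rw [this, Finset.card_insert_of_notMem (by simp)]

lemma pat_cover (T : Finset ℝ) (k : ℕ) (hT : T.card ≤ k) {M : Type*} [AddCommGroup M] [Module ℝ M]
    [FiniteDimensional ℝ M] : ∀ (n : ℕ) (g : Fin n → M →ᵃ[ℝ] ℝ) (d : ℕ) (V : Submodule ℝ M) (x0 : M),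
    Module.finrank ℝ V ≤ d → ∃ P : Finset (Fin n → ℕ), P.card ≤ regB n d k ∧
      ∀ x, x - x0 ∈ V → (fun i => cellIdx T (g i x)) ∈ P := by
  classical
  intro n
  induction n with
  | zero =>
    intro g d V x0 _
    refine ⟨{Fin.elim0}, ?_, ?_⟩
    · simpa using regB_pos 0 d k
    · intro x _
      simp only [Finset.mem_singleton]
      exact Subsingleton.elim _ _
  | succ n ih =>
    intro g d V x0 hV
    obtain ⟨P, hPc, hP⟩ := ih (fun i => g i.succ) d V x0 hV
    have hcons : ∀ x, (fun i => cellIdx T (g i x)) =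
        (Fin.cons (cellIdx T (g 0 x)) (fun i : Fin n => cellIdx T (g i.succ x)) : Fin (n + 1) → ℕ) := by
      intro x
      funext i
      refine Fin.cases ?_ (fun i => ?_) i <;> simp
    by_cases hker : V ≤ LinearMap.ker (g 0).linear
    · refine ⟨P.image (fun p => Fin.cons (cellIdx T (g 0 x0)) p), ?_, ?_⟩
      · exact Finset.card_image_le.trans (hPc.trans (regB_mono_n n d k))
      · intro x hx
        rw [hcons, Finset.mem_image]
        refine ⟨_, hP x hx, ?_⟩
        have h1 : g 0 x = g 0 x0 := by
          have h2 := hker hx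
          rw [LinearMap.mem_ker, ← vsub_eq_sub, AffineMap.linearMap_vsub] at h2
          exact sub_eq_zero.mp h2
        rw [h1]
    · have hlt : V ⊓ LinearMap.ker (g 0).linear < V := by
        refine lt_of_le_of_ne inf_le_left ?_
        intro h
        exact hker (inf_eq_left.mp h)
      have hfr := Submodule.finrank_lt_finrank_of_lt hlt
      obtain ⟨e, rfl⟩ : ∃ e, d = e + 1 := ⟨d - 1, by omega⟩
      have hQ : ∀ t : ℝ, ∃ Q : Finset (Fin n → ℕ), Q.card ≤ regB n e k ∧
          ∀ x, x - x0 ∈ V → g 0 x = t → (fun i : Fin n => cellIdx T (g i.succ x)) ∈ Q := by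
        intro t
        by_cases hex : ∃ z, z - x0 ∈ V ∧ g 0 z = t
        · obtain ⟨z, hz, hzt⟩ := hex
          obtain ⟨Q, hQc, hQ⟩ := ih (fun i => g i.succ) e (V ⊓ LinearMap.ker (g 0).linear) z (by omega)
          refine ⟨Q, hQc, fun x hx hxt => hQ x ⟨?_, ?_⟩⟩
          · have := V.sub_mem hx hz
            simpa using this
          · change x - z ∈ LinearMap.ker (g 0).linear
            rw [LinearMap.mem_ker, ← vsub_eq_sub, AffineMap.linearMap_vsub, hxt, hzt]
            simp
        · exact ⟨∅, by simp, fun x hx hxt => absurd ⟨x, hx, hxt⟩ hex⟩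
      choose Q hQc hQ using hQ
      -- minimal index over a given tail pattern
      have hm : ∀ p : Fin n → ℕ, ∃ m : ℕ, ∀ x, x - x0 ∈ V →
          (fun i : Fin n => cellIdx T (g i.succ x)) = p → cellIdx T (g 0 x) = m ∨
          ∃ y, y - x0 ∈ V ∧ (fun i : Fin n => cellIdx T (g i.succ y)) = p ∧
            cellIdx T (g 0 y) < cellIdx T (g 0 x) := by
        intro p
        by_cases hex : ∃ m, ∃ y, y - x0 ∈ V ∧ (fun i : Fin n => cellIdx T (g i.succ y)) = p ∧
            cellIdx T (g 0 y) = m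
        · refine ⟨Nat.find hex, fun x hx hxp => ?_⟩
          obtain ⟨y, hy, hyp, hym⟩ := Nat.find_spec hex
          have := Nat.find_min' hex ⟨x, hx, hxp, rfl⟩
          rcases this.lt_or_eq with h | h
          · exact Or.inr ⟨y, hy, hyp, by omega⟩
          · exact Or.inl h.symm
        · exact ⟨0, fun x hx hxp => absurd ⟨_, x, hx, hxp, rfl⟩ hex⟩
      choose m hm using hm
      refine ⟨P.image (fun p => Fin.cons (m p) p) ∪
        T.biUnion (fun t => (Q t).image (fun p => Fin.cons (cellIdx T t + 1) p)), ?_, ?_⟩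
      · rw [regB_succ]
        refine (Finset.card_union_le _ _).trans (Nat.add_le_add (Finset.card_image_le.trans hPc) ?_)
        refine (Finset.card_biUnion_le_card_mul _ _ (regB n e k) ?_).trans
          (Nat.mul_le_mul_right _ hT)
        intro t _
        exact Finset.card_image_le.trans (hQc t)
      · intro x hx
        rw [hcons, Finset.mem_union]
        rcases hm _ x hx rfl with h | ⟨y, hy, hyp, hyx⟩
        · left
          rw [Finset.mem_image]
          exact ⟨_, hP x hx, by rw [h]⟩
        · right
          obtain ⟨t, htT, ht1, ht2, ht3⟩ := exists_threshold T hyx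
          rw [Finset.mem_biUnion]
          refine ⟨t, htT, ?_⟩
          rw [Finset.mem_image]
          refine ⟨fun i : Fin n => cellIdx T (g i.succ x), ?_, by rw [ht3]⟩
          have hpos : 0 < g 0 x - g 0 y := by linarith
          set s : ℝ := (t - g 0 y) / (g 0 x - g 0 y) with hs
          have hs0 : 0 ≤ s := div_nonneg (by linarith) hpos.le
          have hs1 : s ≤ 1 := by
            rw [hs, div_le_one hpos]
            linarith
          have hgz : ∀ i, g i (AffineMap.lineMap y x s) = g i y + s * (g i x - g i y) := by
            intro i
            rw [AffineMap.apply_lineMap, AffineMap.lineMap_apply]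
            simp only [vsub_eq_sub, vadd_eq_add, smul_eq_mul]
            ring
          have hz := hQ t (AffineMap.lineMap y x s) ?_ ?_
          · convert hz using 1
            funext i
            rw [hgz, cellIdx_between T (congrFun hyp i) hs0 hs1]
            exact (congrFun hyp i).symm
          · have h1 : AffineMap.lineMap y x s - x0 = (y - x0) + s • ((x - x0) - (y - x0)) := by
              rw [AffineMap.lineMap_apply]
              simp only [vsub_eq_sub, vadd_eq_add, sub_sub_sub_cancel_right]
              abel
            rw [h1]
            exact V.add_mem hy (V.smul_mem _ (V.sub_mem hx hy))
          · rw [hgz, hs, div_mul_cancel₀ _ hpos.ne']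
            ring

lemma exists_thresholds (φ : ℝ → ℝ) (A : Finset (Set ℝ)) (k : ℕ) (hφ : IsPWLWith φ A)
    (hcard : A.card = k + 1) : ∃ T : Finset ℝ, T.card ≤ k ∧
      ∀ m, AffineOn φ {t | cellIdx T t = m} := by
  classical
  have hright : ∀ x : ℝ, ∃ I ∈ A, x ∈ closure (I ∩ Set.Ioi x) := by
    intro x
    have h1 : Set.Ioi x ⊆ ⋃ I ∈ A, closure (I ∩ Set.Ioi x) := by
      intro y hy
      have : y ∈ ⋃ I ∈ A, closure I := by rw [hφ.covers]; trivial
      simp only [Set.mem_iUnion] at this ⊢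
      obtain ⟨I, hI, hyI⟩ := this
      refine ⟨I, hI, ?_⟩
      have := isOpen_Ioi.inter_closure (s := Set.Ioi x) (t := I) ⟨hy, hyI⟩
      rwa [Set.inter_comm] at this
    have h2 : IsClosed (⋃ I ∈ A, closure (I ∩ Set.Ioi x)) :=
      A.finite_toSet.isClosed_biUnion (fun _ _ => isClosed_closure)
    have h3 : x ∈ closure (Set.Ioi x) := by rw [closure_Ioi]; simp
    have := (closure_minimal h1 h2) h3
    simpa using this
  set T : Finset ℝ := (A.filter BddAbove).image sSup with hTdef
  refine ⟨T, ?_, ?_⟩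
  · refine Finset.card_image_le.trans ?_
    have : A.filter BddAbove ⊂ A := by
      refine (Finset.filter_ssubset).mpr ?_
      by_contra hcon
      push Not at hcon
      have hb : BddAbove (⋃ I ∈ A, closure I) := by
        rw [show (⋃ I ∈ A, closure I) = ⋃ I ∈ (A : Set (Set ℝ)), closure I by simp,
          A.finite_toSet.bddAbove_biUnion]
        intro I hI
        exact (hcon I hI).closure
      rw [hφ.covers] at hb
      exact not_bddAbove_univ hb
    have := Finset.card_lt_card this
    omega
  · intro m
    have key : ∀ x, cellIdx T x = m → ∃ I ∈ A, ∀ y, x ≤ y → cellIdx T y = m → y ∈ closure I := by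
      intro x hx
      obtain ⟨I, hI, hxI⟩ := hright x
      refine ⟨I, hI, fun y hxy hy => ?_⟩
      rcases hxy.eq_or_lt with rfl | hlt
      · exact closure_mono Set.inter_subset_left hxI
      · by_contra hyI
        obtain ⟨p, hp1, hp2, hp3⟩ := mem_closure_iff.mp hxI (Set.Iio y) isOpen_Iio hlt
        have hub : ∀ q ∈ I, q ≤ y := by
          intro q hq
          by_contra hqy
          push Not at hqy
          exact hyI (subset_closure ((hφ.ordConn I hI).out hp2 hq ⟨le_of_lt hp1, hqy.le⟩))
        have hbdd : BddAbove I := ⟨y, hub⟩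
        have hsup : sSup I ∈ closure I := csSup_mem_closure ⟨p, hp2⟩ hbdd
        have h1 : sSup I ≤ y := csSup_le ⟨p, hp2⟩ hub
        have h2 : sSup I < y := lt_of_le_of_ne h1 (fun h => hyI (h ▸ hsup))
        have h3 : x < sSup I := lt_of_lt_of_le hp3 (le_csSup hbdd hp2)
        have hmem : sSup I ∈ T :=
          Finset.mem_image_of_mem _ (Finset.mem_filter.mpr ⟨hI, hbdd⟩)
        have : cellIdx T x < cellIdx T y := by
          refine Finset.card_lt_card ?_
          rw [Finset.ssubset_iff_of_subset]
          · exact ⟨sSup I, by simp [hmem, h2], by simp [h3.le]⟩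
          · intro s hs
            simp only [Finset.mem_filter] at hs ⊢
            exact ⟨hs.1, hs.2.trans hlt⟩
        omega
    have hI : ∃ I ∈ A, ∀ y, cellIdx T y = m → y ∈ closure I := by
      by_contra hcon
      push Not at hcon
      choose! w hw using hcon
      have hne : A.Nonempty := by
        rw [← Finset.card_pos]
        omega
      obtain ⟨I0, hI0, hmin⟩ := Finset.exists_min_image A w hne
      obtain ⟨I, hI, hIy⟩ := key (w I0) (hw I0 hI0).1
      exact (hw I hI).2 (hIy _ (hmin I hI) (hw I hI).1)
    obtain ⟨I, hI, hIy⟩ := hI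
    obtain ⟨a, b, hab⟩ := hφ.affine I hI
    refine ⟨a, b, fun x hx => ?_⟩
    have hcl : IsClosed {x | φ x = a * x + b} := isClosed_eq hφ.cont (by fun_prop)
    exact closure_minimal (show I ⊆ {x | φ x = a * x + b} from hab) hcl (hIy x hx)

lemma layer_cover (φ : ℝ → ℝ) (T : Finset ℝ) (k : ℕ) (hT : T.card ≤ k)
    (hφ : ∀ m, AffineOn φ {t | cellIdx T t = m}) (nsz : ℕ → ℕ)
    (W : ∀ j : ℕ, Matrix (Fin (nsz (j + 1))) (Fin (nsz j)) ℝ)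
    (u : ∀ j : ℕ, Fin (nsz (j + 1)) → ℝ) (l : ℕ) :
    ∃ S : Finset (Set (Fin (nsz 0) → ℝ)),
      S.card ≤ ∏ ν ∈ Finset.range l,
        Fbound (Finset.inf' (Finset.range (ν + 1)) Finset.nonempty_range_add_one
          fun j => (W j).rank) (nsz (ν + 1)) k ∧
      (∀ x, ∃ C ∈ S, x ∈ C) ∧
      ∀ C ∈ S, Convex ℝ C ∧ ∃ a : (Fin (nsz 0) → ℝ) →ᵃ[ℝ] (Fin (nsz l) → ℝ),
        (∀ x ∈ C, layerOut φ nsz W u l x = a x) ∧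
        ∀ j < l, Module.finrank ℝ (LinearMap.range a.linear) ≤ (W j).rank := by
  classical
  induction l with
  | zero =>
    refine ⟨{Set.univ}, by simp, fun x => ⟨Set.univ, by simp⟩, ?_⟩
    intro C hC
    rw [Finset.mem_singleton] at hC
    subst hC
    exact ⟨convex_univ, AffineMap.id ℝ _, fun x _ => rfl, fun j hj => by omega⟩
  | succ l ih =>
    obtain ⟨S, hSc, hScov, hS⟩ := ih
    choose sl ic hsl using hφ
    have step : ∀ C ∈ S, ∃ D : Finset (Set (Fin (nsz 0) → ℝ)),
        D.card ≤ Fbound (Finset.inf' (Finset.range (l + 1)) Finset.nonempty_range_add_one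
          fun j => (W j).rank) (nsz (l + 1)) k ∧
        (∀ x ∈ C, ∃ E ∈ D, x ∈ E) ∧
        ∀ E ∈ D, Convex ℝ E ∧ ∃ a : (Fin (nsz 0) → ℝ) →ᵃ[ℝ] (Fin (nsz (l + 1)) → ℝ),
          (∀ x ∈ E, layerOut φ nsz W u (l + 1) x = a x) ∧
          ∀ j < l + 1, Module.finrank ℝ (LinearMap.range a.linear) ≤ (W j).rank := by
      intro C hC
      obtain ⟨hconv, a, ha, hrk⟩ := hS C hC
      set G : (Fin (nsz 0) → ℝ) →ᵃ[ℝ] (Fin (nsz (l + 1)) → ℝ) :=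
        ((W l).mulVecLin.toAffineMap + AffineMap.const ℝ _ (u l)).comp a with hG
      have hGlin : G.linear = (W l).mulVecLin.comp a.linear := by
        ext
        simp [hG]
      have hGa : ∀ x, G x = (W l).mulVec (a x) + u l := by
        intro x
        simp [hG]
      have hGrk : ∀ j < l + 1, Module.finrank ℝ (LinearMap.range G.linear) ≤ (W j).rank := by
        intro j hj
        rw [hGlin]
        rcases Nat.lt_succ_iff_lt_or_eq.mp hj with h | rfl
        · rw [LinearMap.range_comp]
          exact (Submodule.finrank_map_le _ _).trans (hrk j h)
        · exact Submodule.finrank_mono (LinearMap.range_comp_le_range _ _)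
      obtain ⟨P, hPc, hP⟩ := pat_cover T k hT (nsz (l + 1))
        (fun i => (LinearMap.proj i : (Fin (nsz (l + 1)) → ℝ) →ₗ[ℝ] ℝ).toAffineMap)
        (Finset.inf' (Finset.range (l + 1)) Finset.nonempty_range_add_one fun j => (W j).rank)
        (LinearMap.range G.linear) (G 0)
        (by
          refine Finset.le_inf' _ _ fun j hj => ?_
          exact hGrk j (Finset.mem_range.mp hj))
      refine ⟨P.image (fun p => C ∩ {x | ∀ i, cellIdx T (G x i) = p i}), ?_, ?_, ?_⟩
      · exact Finset.card_image_le.trans (hPc.trans (regB_le_Fbound _ _ _))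
      · intro x hx
        have := hP (G x) ⟨x - 0, by rw [← vsub_eq_sub, AffineMap.linearMap_vsub]; rfl⟩
        exact ⟨_, Finset.mem_image_of_mem _ this, hx, fun i => rfl⟩
      · intro E hE
        obtain ⟨p, hp, rfl⟩ := Finset.mem_image.mp hE
        refine ⟨hconv.inter ?_, ?_⟩
        · have : {x | ∀ i, cellIdx T (G x i) = p i} =
              ⋂ i, ((LinearMap.proj i : (Fin (nsz (l + 1)) → ℝ) →ₗ[ℝ] ℝ).toAffineMap.comp G) ⁻¹'
                {t | cellIdx T t = p i} := by
            ext x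
            simp
          rw [this]
          refine convex_iInter fun i => Convex.affine_preimage _ ?_
          rw [convex_iff_ordConnected]
          refine ⟨fun s hs t ht r hr => ?_⟩
          have h1 := cellIdx_mono T hr.1
          have h2 := cellIdx_mono T hr.2
          simp only [Set.mem_setOf_eq] at hs ht ⊢
          omega
        · refine ⟨((Matrix.diagonal (fun i => sl (p i))).mulVecLin.toAffineMap +
            AffineMap.const ℝ _ (fun i => ic (p i))).comp G, ?_, ?_⟩
          · intro x hx
            funext i
            have h1 : layerOut φ nsz W u (l + 1) x i = φ (G x i) := by
              rw [hGa, ← ha x hx.1]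
              rfl
            rw [h1, hsl (p i) _ (hx.2 i)]
            simp [Matrix.mulVec_diagonal]
          · intro j hj
            refine le_trans ?_ (hGrk j hj)
            have : (((Matrix.diagonal (fun i => sl (p i))).mulVecLin.toAffineMap +
              AffineMap.const ℝ _ (fun i => ic (p i))).comp G).linear =
              (Matrix.diagonal (fun i => sl (p i))).mulVecLin.comp G.linear := by
              ext
              simp
            rw [this, LinearMap.range_comp]
            exact Submodule.finrank_map_le _ _
    choose! D hDc hDcov hD using step
    refine ⟨S.biUnion D, ?_, ?_, ?_⟩
    · rw [Finset.prod_range_succ]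
      exact (Finset.card_biUnion_le_card_mul _ _ _ hDc).trans (Nat.mul_le_mul_right _ hSc)
    · intro x
      obtain ⟨C, hC, hx⟩ := hScov x
      obtain ⟨E, hE, hxE⟩ := hDcov C hC x hx
      exact ⟨E, Finset.mem_biUnion.mpr ⟨C, hC, hE⟩, hxE⟩
    · intro E hE
      obtain ⟨C, hC, hE⟩ := Finset.mem_biUnion.mp hE
      exact hD C hC E hE

/-- The set of fixed points of a multi-layer network with a PWL activation
with `k+1` pieces has at most `∏_{ν=1}^{L} F(d_ν, n_ν, k)` connected components, where
`d_ν = min{rank W_j : j ≤ ν}`. -/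
theorem card_components_fixedPoints_le
    (φ : ℝ → ℝ) (Aφ : Finset (Set ℝ)) (k : ℕ) (hk : 1 ≤ k)
    (hφ : IsPWLWith φ Aφ) (hcard : Aφ.card = k + 1)
    (L : ℕ) (hL : 1 ≤ L) (nsz : ℕ → ℕ)
    (W : ∀ j : ℕ, Matrix (Fin (nsz (j + 1))) (Fin (nsz j)) ℝ)
    (u : ∀ j : ℕ, Fin (nsz (j + 1)) → ℝ) (hio : nsz 0 = nsz L) :
    {C : Set (Fin (nsz 0) → ℝ) | ∃ x ∈ {y | netFun φ nsz W u L hio y = y},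
        C = connectedComponentIn {y | netFun φ nsz W u L hio y = y} x}.ncard ≤
      ∏ ν ∈ Finset.range L,
        Fbound (Finset.inf' (Finset.range (ν + 1)) Finset.nonempty_range_add_one
          fun j => (W j).rank) (nsz (ν + 1)) k := by
  classical
  obtain ⟨T, hT, hTφ⟩ := exists_thresholds φ Aφ k hφ hcard
  obtain ⟨S, hSc, hScov, hS⟩ := layer_cover φ T k hT hTφ nsz W u L
  refine le_trans ?_ hSc
  set Fx : Set (Fin (nsz 0) → ℝ) := {y | netFun φ nsz W u L hio y = y} with hFx
  have hpre : ∀ C ∈ S, IsPreconnected (Fx ∩ C) := by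
    intro C hC
    obtain ⟨hconv, a, ha, -⟩ := hS C hC
    have hconv2 : Convex ℝ (Fx ∩ C) := by
      intro x hx y hy s t hs ht hst
      refine ⟨?_, hconv hx.2 hy.2 hs ht hst⟩
      have hz := ha _ (hconv hx.2 hy.2 hs ht hst)
      have hx1 : netFun φ nsz W u L hio x = x := hx.1
      have hy1 : netFun φ nsz W u L hio y = y := hy.1
      change netFun φ nsz W u L hio (s • x + t • y) = s • x + t • y
      funext i
      have ex := congrFun hx1 i
      have ey := congrFun hy1 i
      unfold netFun at ex ey ⊢
      rw [ha x hx.2] at ex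
      rw [ha y hy.2] at ey
      rw [hz, Convex.combo_affine_apply hst]
      simp [ex, ey]
    exact hconv2.isPreconnected
  have hex : ∀ C : Set (Fin (nsz 0) → ℝ), ∃ x, (Fx ∩ C).Nonempty → x ∈ Fx ∩ C := by
    intro C
    by_cases h : (Fx ∩ C).Nonempty
    · exact ⟨h.some, fun _ => h.some_mem⟩
    · exact ⟨0, fun h2 => absurd h2 h⟩
  choose r hr using hex
  have hsub : {C : Set (Fin (nsz 0) → ℝ) | ∃ x ∈ Fx, C = connectedComponentIn Fx x} ⊆
      ((S.image (fun C => connectedComponentIn Fx (r C)) : Finset (Set (Fin (nsz 0) → ℝ))) :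
        Set (Set (Fin (nsz 0) → ℝ))) := by
    rintro _ ⟨x, hx, rfl⟩
    obtain ⟨C, hC, hxC⟩ := hScov x
    have hrC := hr C ⟨x, hx, hxC⟩
    rw [Finset.mem_coe, Finset.mem_image]
    refine ⟨C, hC, ?_⟩
    refine (connectedComponentIn_eq ?_).symm
    exact (hpre C hC).subset_connectedComponentIn ⟨hx, hxC⟩ Set.inter_subset_left hrC
  refine (Set.ncard_le_ncard hsub (Finset.finite_toSet _)).trans ?_
  rw [Set.ncard_coe_finset]
  exact Finset.card_image_le

end
end
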